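/- Let ε ∈ (0,1) and let (A, B, w, (B_i)_{i∈A}) be a (1,ε)-restricted allocation instance. For every real T > 0, if the configuration LP CLP(T) is feasible, then there exists an allocation (S_i)_{i∈A} such that every agent i ∈ A receives value w(S_i) ≥ T/3. In particular, OPT ≥ T/3 whenever CLP(T) is feasible, i.e., the integrality gap of the configuration LP of the (1,ε)-restricted allocation problem is at most 3. -/

import Mathlib

open Finset

/-!
Write `z i j` for the total LP weight of the configurations of agent `i` containing item `j`.

If all item values `a`, `b` are below `T / 3`, round `z` separately on each class of equal-valued
items: by Hall's theorem agent `i` can receive `⌊∑ j, z i j⌋` items of each class, so it loses at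
most one item per class and keeps `T - a - b ≥ T / 3`.

Otherwise one of the two values is at least `T / 3`, and an agent is satisfied by a single item of
that value or by `k = ⌈T / (3 * b)⌉` items of the other value `b`. Disjoint such bundles are found
by a Haxell-type alternating search: price the items so that a bundle together with the bundles
blocking it costs at most `2 * k - 1` per blocker, whereas the LP forces every set of items
hitting all bundles of the agents in `P` to cost at least `(2 * k - 1) * #P`.
-/

section HypergraphMatching

variable {A B R : Type*} {E : A → Set (Finset B)} {D P : Finset A} {e e' F : Finset B}
  {M M₀ : A → Finset B} {C : Set (A → Finset B)} {a : A}

/-- `M` chooses pairwise disjoint edges `M i ∈ E i` for the agents `i ∈ D`; its values outside `D`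
are irrelevant. -/
structure IsMatchingOn (E : A → Set (Finset B)) (D : Finset A) (M : A → Finset B) : Prop where
  mem : ∀ i ∈ D, M i ∈ E i
  pairwiseDisjoint : (D : Set A).PairwiseDisjoint M

variable [DecidableEq B]

/-- The agents of `D` whose edges in `M` prevent `e` from being added to the matching. -/
def blockers (D : Finset A) (M : A → Finset B) (e : Finset B) : Finset A :=
  {i ∈ D | ¬Disjoint (M i) e}

theorem mem_blockers {i : A} : i ∈ blockers D M e ↔ i ∈ D ∧ ¬Disjoint (M i) e :=
  mem_filter

theorem blockers_subset : blockers D M e ⊆ D :=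
  filter_subset _ _

theorem blockers_eq_empty : blockers D M e = ∅ ↔ ∀ i ∈ D, Disjoint (M i) e := by
  simp [blockers, filter_eq_empty_iff]

variable [DecidableEq A]

theorem blockers_update (h : Disjoint e' e) :
    blockers D (Function.update M a e') e = (blockers D M e).erase a := by
  ext i
  rw [mem_erase, mem_blockers, mem_blockers]
  rcases eq_or_ne i a with rfl | hia
  · simp [h]
  · simp [hia]

theorem IsMatchingOn.update (hM : IsMatchingOn E D M) (he : e ∈ E a)
    (hfree : blockers D M e = ∅) : IsMatchingOn E (insert a D) (Function.update M a e) := by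
  rw [blockers_eq_empty] at hfree
  have mem_of_ne {i : A} (hi : i ∈ insert a D) (hia : i ≠ a) : i ∈ D :=
    (mem_insert.1 hi).resolve_left hia
  refine ⟨fun i hi => ?_, fun i hi i' hi' hne => ?_⟩
  · rcases eq_or_ne i a with rfl | hia
    · simpa using he
    · simpa [hia] using hM.mem i (mem_of_ne hi hia)
  · rcases eq_or_ne i a with rfl | hia
    · simpa [Function.onFun, hne.symm] using (hfree i' (mem_of_ne hi' hne.symm)).symm
    · rcases eq_or_ne i' a with rfl | hia'
      · simpa [Function.onFun, hia] using hfree i (mem_of_ne hi hia)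
      · simpa [Function.onFun, hia, hia'] using
          hM.pairwiseDisjoint (mem_of_ne hi hia) (mem_of_ne hi' hia') hne

/-- The matchings of `C` in which `e` has the same blockers as in `M₀`, and these blockers hold
the same edges as in `M₀`. -/
def frozenMatchings (D : Finset A) (C : Set (A → Finset B)) (M₀ : A → Finset B) (e : Finset B) :
    Set (A → Finset B) :=
  {M ∈ C | blockers D M e = blockers D M₀ e ∧ ∀ i ∈ blockers D M₀ e, M i = M₀ i}

variable [CommRing R] [LinearOrder R] {y : B → R} {K : R}

/-- Item prices `y` certifying that the hypergraphs `E i` have a perfect matching, in the spirit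
of Haxell's condition: a blocked edge together with its blocking edges costs at most `K` per
blocker, while items meeting every edge of the agents in `P` cost at least `K` per agent. -/
structure IsPricing (E : A → Set (Finset B)) (y : B → R) (K : R) : Prop where
  pos : 0 < K
  nonneg : ∀ j, 0 ≤ y j
  sum_union_le : ∀ ⦃a e M⦄ ⦃Q : Finset A⦄, e ∈ E a → Q.Nonempty →
    (∀ i ∈ Q, M i ∈ E i ∧ ¬Disjoint (M i) e) → ∑ j ∈ e ∪ Q.biUnion M, y j ≤ K * #Q
  exists_disjoint : ∀ ⦃P : Finset A⦄ ⦃F⦄, ∑ j ∈ F, y j < K * #P →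
    ∃ a ∈ P, ∃ e ∈ E a, Disjoint e F

/-- A state of the alternating search for an augmentation of a matching on `D`. The agents in `P`
have been reached and the items in `F` are reserved; `C` is the family of matchings still under
consideration, which agree with the search so far and are closed under switching an unreached
agent to an edge free of conflicts. -/
structure IsSearchState (E : A → Set (Finset B)) (y : B → R) (K : R) (D P : Finset A)
    (F : Finset B) (C : Set (A → Finset B)) : Prop where
  nonempty : C.Nonempty
  isMatchingOn : ∀ M ∈ C, IsMatchingOn E D M
  sum_add_le : ∑ j ∈ F, y j + K ≤ K * #P
  blocked : ∀ M ∈ C, ∀ a ∈ P, ∀ e ∈ E a, Disjoint e F → (blockers D M e).Nonempty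
  subset : ∀ M ∈ C, ∀ i ∈ P, i ∈ D → M i ⊆ F
  update_mem : ∀ M ∈ C, ∀ a ∈ D, a ∉ P → ∀ e ∈ E a, Disjoint e F → blockers D M e = ∅ →
    Function.update M a e ∈ C

namespace IsSearchState

theorem of_not_exists_isMatchingOn_insert (ha : a ∉ D) (hM : IsMatchingOn E D M)
    (hmax : ¬∃ M, IsMatchingOn E (insert a D) M) :
    IsSearchState E y K D {a} ∅ {M | IsMatchingOn E D M} where
  nonempty := ⟨M, hM⟩
  isMatchingOn _ hM := hM
  sum_add_le := by simp
  blocked M hM i hi e he _ := by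
    obtain rfl := mem_singleton.1 hi
    by_contra hfree
    exact hmax ⟨_, hM.update he (not_nonempty_iff_eq_empty.1 hfree)⟩
  subset M _ i hi hiD := absurd (mem_singleton.1 hi ▸ hiD) ha
  update_mem M hM i hi _ e he _ hfree := by
    simpa [insert_eq_of_mem hi] using hM.update he hfree

theorem disjoint_blockers (h : IsSearchState E y K D P F C) (hM : M ∈ C) (heF : Disjoint e F) :
    Disjoint P (blockers D M e) := by
  rw [Finset.disjoint_left]
  intro i hiP hi
  obtain ⟨hiD, hmeet⟩ := mem_blockers.1 hi
  exact hmeet (heF.symm.mono_left (h.subset M hM i hiP hiD))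

-- Switching a blocker of `e` to a free edge avoiding `e` would leave `e` with fewer blockers.
theorem blockers_nonempty_of_minimal (h : IsSearchState E y K D P F C) (hM₀ : M₀ ∈ C)
    (hmin : ∀ M ∈ C, #(blockers D M₀ e) ≤ #(blockers D M e)) (heF : Disjoint e F)
    (hM : M ∈ frozenMatchings D C M₀ e) (ha : a ∈ blockers D M₀ e) (he' : e' ∈ E a)
    (he'F : Disjoint e' F) (he'e : Disjoint e' e) : (blockers D M e').Nonempty := by
  obtain ⟨hMC, hblock, -⟩ := hM
  by_contra hfree
  have haP : a ∉ P := Finset.disjoint_right.1 (h.disjoint_blockers hM₀ heF) ha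
  have hupdate : Function.update M a e' ∈ C :=
    h.update_mem M hMC a (blockers_subset ha) haP e' he' he'F (not_nonempty_iff_eq_empty.1 hfree)
  have hle := hmin _ hupdate
  rw [blockers_update he'e, hblock] at hle
  exact (card_erase_lt_of_mem ha).not_ge hle

theorem update_mem_frozenMatchings (h : IsSearchState E y K D P F C)
    (hM : M ∈ frozenMatchings D C M₀ e) (haD : a ∈ D) (haP : a ∉ P)
    (ha : a ∉ blockers D M₀ e) (he' : e' ∈ E a)
    (he'F : Disjoint e' F) (he'e : Disjoint e' e) (hfree : blockers D M e' = ∅) :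
    Function.update M a e' ∈ frozenMatchings D C M₀ e := by
  obtain ⟨hMC, hblock, hagree⟩ := hM
  refine ⟨h.update_mem M hMC a haD haP e' he' he'F hfree, ?_, fun i hi => ?_⟩
  · rw [blockers_update he'e, hblock, erase_eq_of_notMem ha]
  · rw [Function.update_of_ne (ne_of_mem_of_not_mem hi ha), hagree i hi]

variable [IsStrictOrderedRing R]

theorem sum_add_le_of_blockers (h : IsSearchState E y K D P F C) (hy : IsPricing E y K)
    (hM : M ∈ C) (he : e ∈ E a) (heF : Disjoint e F) (hne : (blockers D M e).Nonempty) :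
    ∑ j ∈ F ∪ (e ∪ (blockers D M e).biUnion M), y j + K ≤ K * #(P ∪ blockers D M e) := by
  have hcost := hy.sum_union_le (M := M) he hne fun i hi =>
    ⟨(h.isMatchingOn M hM).mem i (blockers_subset hi), (mem_blockers.1 hi).2⟩
  have hunion := sum_union_inter (s₁ := F) (s₂ := e ∪ (blockers D M e).biUnion M) (f := y)
  have hinter : 0 ≤ ∑ j ∈ F ∩ (e ∪ (blockers D M e).biUnion M), y j :=
    sum_nonneg fun j _ => hy.nonneg j
  rw [card_union_of_disjoint (h.disjoint_blockers hM heF), Nat.cast_add, mul_add]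
  linarith [h.sum_add_le]

theorem union_blockers (h : IsSearchState E y K D P F C) (hy : IsPricing E y K) (hM₀ : M₀ ∈ C)
    (hmin : ∀ M ∈ C, #(blockers D M₀ e) ≤ #(blockers D M e)) (he : e ∈ E a)
    (heF : Disjoint e F) (hne : (blockers D M₀ e).Nonempty) :
    IsSearchState E y K D (P ∪ blockers D M₀ e) (F ∪ (e ∪ (blockers D M₀ e).biUnion M₀))
      (frozenMatchings D C M₀ e) where
  nonempty := ⟨M₀, hM₀, rfl, fun _ _ => rfl⟩
  isMatchingOn M hM := h.isMatchingOn M hM.1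
  sum_add_le := h.sum_add_le_of_blockers hy hM₀ he heF hne
  blocked M hM i hi e' he' hdisj := by
    obtain ⟨he'F, he'e, -⟩ := by simpa only [disjoint_union_right] using hdisj
    rcases mem_union.1 hi with hiP | hiQ
    · exact h.blocked M hM.1 i hiP e' he' he'F
    · exact h.blockers_nonempty_of_minimal hM₀ hmin heF hM hiQ he' he'F he'e
  subset M hM i hi hiD := by
    rcases mem_union.1 hi with hiP | hiQ
    · exact (h.subset M hM.1 i hiP hiD).trans subset_union_left
    · rw [hM.2.2 i hiQ]
      exact (subset_biUnion_of_mem M₀ hiQ).trans (subset_union_right.trans subset_union_right)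
  update_mem M hM i hiD hi e' he' hdisj hfree := by
    obtain ⟨he'F, he'e, -⟩ := by simpa only [disjoint_union_right] using hdisj
    obtain ⟨hiP, hiQ⟩ := notMem_union.1 hi
    exact h.update_mem_frozenMatchings hM hiD hiP hiQ he' he'F he'e hfree

theorem exists_extension (h : IsSearchState E y K D P F C) (hy : IsPricing E y K) :
    ∃ Q ⊆ D, Q.Nonempty ∧ Disjoint P Q ∧ ∃ F' C', IsSearchState E y K D (P ∪ Q) F' C' := by
  obtain ⟨a, ha, e, he, heF⟩ := hy.exists_disjoint (P := P) (F := F)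
    (by linarith [h.sum_add_le, hy.pos])
  obtain ⟨M₀, hM₀, hmin⟩ :=
    exists_minimalFor_of_wellFoundedLT (· ∈ C) (fun M => #(blockers D M e)) h.nonempty
  have hne := h.blocked M₀ hM₀ a ha e he heF
  exact ⟨blockers D M₀ e, blockers_subset, hne, h.disjoint_blockers hM₀ heF, _, _,
    h.union_blockers hy hM₀ (fun M hM => (le_total _ _).elim id (hmin hM)) he heF hne⟩

theorem not_isPricing (h : IsSearchState E y K D P F C) : ¬IsPricing E y K := by
  intro hy
  induction hn : #(D \ P) using Nat.strong_induction_on generalizing P F C with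
  | _ n ih =>
    obtain ⟨Q, hQD, ⟨i, hi⟩, hPQ, F', C', h'⟩ := h.exists_extension hy
    have hlt : #(D \ (P ∪ Q)) < #(D \ P) :=
      card_lt_card <| (ssubset_iff_of_subset (sdiff_subset_sdiff Subset.rfl subset_union_left)).2
        ⟨i, mem_sdiff.2 ⟨hQD hi, Finset.disjoint_right.1 hPQ hi⟩, by simp [hi]⟩
    exact ih _ (hn ▸ hlt) h' rfl

end IsSearchState

omit [DecidableEq A] in
theorem IsPricing.exists_isMatchingOn [IsStrictOrderedRing R] (hy : IsPricing E y K)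
    (D : Finset A) : ∃ M, IsMatchingOn E D M := by
  classical
  induction D using Finset.induction_on with
  | empty => exact ⟨fun _ => ∅, by simp, by simp⟩
  | insert a D ha ih =>
    obtain ⟨M, hM⟩ := ih
    by_contra hmax
    exact (IsSearchState.of_not_exists_isMatchingOn_insert ha hM hmax).not_isPricing hy

end HypergraphMatching

section Bundles

variable {A B : Type*} {H S F e : Finset B} {k : ℕ}

/-- A bundle satisfies one agent: it is a single item of `H` or consists of `k` items
outside `H`. -/
def IsBundle (H : Finset B) (k : ℕ) (S : Finset B) : Prop :=
  (∃ h ∈ H, S = {h}) ∨ (Disjoint S H ∧ #S = k)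

namespace IsBundle

theorem eq_singleton_of_mem {h : B} (hS : IsBundle H k S) (hH : h ∈ H) (hh : h ∈ S) :
    S = {h} := by
  rcases hS with ⟨h', -, rfl⟩ | ⟨hdisj, -⟩
  · rw [mem_singleton.1 hh]
  · exact absurd hH (Finset.disjoint_left.1 hdisj hh)

theorem light_of_not_disjoint (hS : IsBundle H k S) (he : Disjoint e H)
    (hmeet : ¬Disjoint S e) : Disjoint S H ∧ #S = k := by
  refine hS.resolve_left ?_
  rintro ⟨h, hH, rfl⟩
  exact hmeet (disjoint_singleton_left.2 fun hh => Finset.disjoint_left.1 he hh hH)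

end IsBundle

variable [DecidableEq B]

/-- The item prices of the alternating search: `2 * k - 1` on `H` and `1` elsewhere. -/
def bundlePrice (H : Finset B) (k : ℕ) (j : B) : ℝ :=
  if j ∈ H then 2 * k - 1 else 1

theorem bundlePrice_of_mem {j : B} (hj : j ∈ H) : bundlePrice H k j = 2 * k - 1 :=
  if_pos hj

theorem bundlePrice_nonneg (hk : 0 < k) (j : B) : 0 ≤ bundlePrice H k j := by
  have : (1 : ℝ) ≤ k := by exact_mod_cast hk
  unfold bundlePrice
  split_ifs <;> linarith

theorem sum_bundlePrice_of_disjoint (h : Disjoint S H) : ∑ j ∈ S, bundlePrice H k j = #S := by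
  have hone : ∀ j ∈ S, bundlePrice H k j = 1 := fun j hj => if_neg (Finset.disjoint_left.1 h hj)
  rw [sum_congr rfl hone, sum_const, nsmul_one]

-- Each `M i` meets `e`, so it contributes at most `k - 1` items outside `e`.
theorem card_union_biUnion_le_of_not_disjoint {Q : Finset A} {M : A → Finset B} (he : #e = k)
    (hQ : Q.Nonempty) (hM : ∀ i ∈ Q, #(M i) = k ∧ ¬Disjoint (M i) e) :
    (#(e ∪ Q.biUnion M) : ℝ) ≤ (2 * k - 1) * #Q := by
  have hsdiff : ∀ i ∈ Q, (#(M i \ e) : ℝ) ≤ k - 1 := fun i hi => by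
    obtain ⟨hcard, hmeet⟩ := hM i hi
    have hinter : 0 < #(M i ∩ e) := card_pos.2 (not_disjoint_iff_nonempty_inter.1 hmeet)
    have hsplit := card_inter_add_card_sdiff (M i) e
    rw [le_sub_iff_add_le]
    exact_mod_cast (by omega : #(M i \ e) + 1 ≤ k)
  have hunion : e ∪ Q.biUnion M = e ∪ Q.biUnion (fun i => M i \ e) := by
    ext j
    by_cases hj : j ∈ e <;> simp [hj]
  have hQ1 : (1 : ℝ) ≤ #Q := by exact_mod_cast hQ.card_pos
  calc (#(e ∪ Q.biUnion M) : ℝ)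
      ≤ #e + ∑ i ∈ Q, (#(M i \ e) : ℝ) := by
        rw [hunion]
        exact_mod_cast (card_union_le _ _).trans (by gcongr; exact card_biUnion_le)
    _ ≤ k + #Q * (k - 1) := by
        rw [he, ← nsmul_eq_mul]
        gcongr
        exact sum_le_card_nsmul _ _ _ hsdiff
    _ ≤ (2 * k - 1) * #Q := by nlinarith [(k.cast_nonneg : (0 : ℝ) ≤ k)]

theorem sum_bundlePrice_union_le {Q : Finset A} {M : A → Finset B} (hk : 0 < k)
    (he : IsBundle H k e) (hQ : Q.Nonempty)
    (hM : ∀ i ∈ Q, IsBundle H k (M i) ∧ ¬Disjoint (M i) e) :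
    ∑ j ∈ e ∪ Q.biUnion M, bundlePrice H k j ≤ (2 * k - 1) * #Q := by
  rcases he with ⟨h, hH, rfl⟩ | ⟨heH, hcard⟩
  · have hblock : Q.biUnion M ⊆ {h} := biUnion_subset.2 fun i hi =>
      ((hM i hi).1.eq_singleton_of_mem hH (by simpa using (hM i hi).2)).subset
    have hprice := bundlePrice_nonneg (H := H) hk h
    rw [union_eq_left.2 hblock, sum_singleton]
    rw [bundlePrice_of_mem hH] at hprice ⊢
    exact le_mul_of_one_le_right hprice (by exact_mod_cast hQ.card_pos)
  · have hlight := fun i hi => (hM i hi).1.light_of_not_disjoint heH (hM i hi).2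
    have hdisj : Disjoint (e ∪ Q.biUnion M) H :=
      disjoint_union_left.2 ⟨heH, (disjoint_biUnion_left _ _ _).2 fun i hi => (hlight i hi).1⟩
    rw [sum_bundlePrice_of_disjoint hdisj]
    exact card_union_biUnion_le_of_not_disjoint hcard hQ fun i hi => ⟨(hlight i hi).2, (hM i hi).2⟩

theorem le_sum_bundlePrice_inter (hk : 0 < k) (hS : Disjoint S H → 3 * k < #S + 3)
    (hmeet : ∀ U ⊆ S, IsBundle H k U → ¬Disjoint U F) :
    2 * k - 1 ≤ ∑ j ∈ S ∩ F, bundlePrice H k j := by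
  by_cases hSH : Disjoint S H
  · have hsdiff : #(S \ F) < k := by
      by_contra! hle
      obtain ⟨U, hU, hcard⟩ := exists_subset_card_eq hle
      have hUS : U ⊆ S := hU.trans sdiff_subset
      exact hmeet U hUS (.inr ⟨hSH.mono_left hUS, hcard⟩) (sdiff_disjoint.mono_left hU)
    have hsplit := card_inter_add_card_sdiff S F
    have hcount := hS hSH
    rw [sum_bundlePrice_of_disjoint (hSH.mono_left inter_subset_left), sub_le_iff_le_add]
    exact_mod_cast (by omega : 2 * k ≤ #(S ∩ F) + 1)
  · obtain ⟨h, hh, hH⟩ := not_disjoint_iff.1 hSH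
    have hF : h ∈ F := by simpa using hmeet {h} (by simpa using hh) (.inl ⟨h, hH, rfl⟩)
    rw [← bundlePrice_of_mem hH]
    exact single_le_sum (fun j _ => bundlePrice_nonneg hk j) (mem_inter.2 ⟨hh, hF⟩)

end Bundles

section FractionalHall

variable {ι B R : Type*} [Fintype ι] [Fintype B] [CommRing R] [LinearOrder R]
  [IsStrictOrderedRing R] {z : ι → B → R}

theorem sum_sum_le_card_biUnion_support [DecidableEq B] (hz : ∀ i j, 0 ≤ z i j)
    (hz1 : ∀ j, ∑ i, z i j ≤ 1) (I : Finset ι) :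
    ∑ i ∈ I, ∑ j, z i j ≤ #(I.biUnion fun i => ({j | 0 < z i j} : Finset B)) := by
  set N := I.biUnion fun i => ({j | 0 < z i j} : Finset B)
  have hsupport : ∀ i ∈ I, ∑ j, z i j = ∑ j ∈ N, z i j := fun i hi =>
    (sum_subset (subset_univ N) fun j _ hj => by
      by_contra hne
      exact hj (mem_biUnion.2 ⟨i, hi, by simpa using (hz i j).lt_of_ne' hne⟩)).symm
  calc ∑ i ∈ I, ∑ j, z i j = ∑ j ∈ N, ∑ i ∈ I, z i j := by
        rw [sum_congr rfl hsupport, sum_comm]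
    _ ≤ ∑ j ∈ N, 1 := by
        gcongr with j
        exact (sum_le_univ_sum_of_nonneg fun i => hz i j).trans (hz1 j)
    _ = #N := by simp

theorem exists_pairwise_disjoint_card_eq (hz : ∀ i j, 0 ≤ z i j) (hz1 : ∀ j, ∑ i, z i j ≤ 1)
    {n : ι → ℕ} (hn : ∀ i, (n i : R) ≤ ∑ j, z i j) :
    ∃ S : ι → Finset B, (∀ i, ∀ j ∈ S i, 0 < z i j) ∧ (∀ i, #(S i) = n i) ∧
      Pairwise (Function.onFun Disjoint S) := by
  classical
  -- Hall's theorem is applied with `n i` copies of each `i`.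
  let N : (Σ i, Fin (n i)) → Finset B := fun p => {j | 0 < z p.1 j}
  have hall (s : Finset (Σ i, Fin (n i))) : #s ≤ #(s.biUnion N) := by
    have hcopies : s ⊆ (s.image Sigma.fst).sigma fun _ => univ := fun p hp =>
      mem_sigma.2 ⟨mem_image_of_mem _ hp, mem_univ _⟩
    have hcard : #s ≤ ∑ i ∈ s.image Sigma.fst, n i := by simpa using card_le_card hcopies
    rw [← Nat.cast_le (α := R)]
    calc (#s : R) ≤ ∑ i ∈ s.image Sigma.fst, (n i : R) := by exact_mod_cast hcard
      _ ≤ ∑ i ∈ s.image Sigma.fst, ∑ j, z i j := sum_le_sum fun i _ => hn i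
      _ ≤ #(s.biUnion N) := by
          simpa only [image_biUnion] using
            sum_sum_le_card_biUnion_support hz hz1 (s.image Sigma.fst)
  obtain ⟨f, hf, hfN⟩ := (all_card_le_biUnion_card_iff_exists_injective N).1 hall
  refine ⟨fun i => univ.image fun q => f ⟨i, q⟩, fun i j hj => ?_, fun i => ?_,
    fun i i' hne => ?_⟩
  · obtain ⟨q, -, rfl⟩ := mem_image.1 hj
    simpa [N] using hfN ⟨i, q⟩
  · simpa [Function.comp_def] using
      card_image_of_injective univ (hf.comp (sigma_mk_injective (i := i)))
  · simp only [Function.onFun, Finset.disjoint_left, mem_image, mem_univ, true_and]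
    rintro _ ⟨q, rfl⟩ ⟨q', h⟩
    exact hne (congrArg Sigma.fst (hf h)).symm

theorem exists_pairwise_disjoint_card_eq_of_classes {κ : Type*} [Finite κ] [DecidableEq κ]
    (hz : ∀ i j, 0 ≤ z i j) (hz1 : ∀ j, ∑ i, z i j ≤ 1) (c : B → κ) {n : ι × κ → ℕ}
    (hn : ∀ p, (n p : R) ≤ ∑ j with c j = p.2, z p.1 j) :
    ∃ S : ι × κ → Finset B, (∀ p, ∀ j ∈ S p, c j = p.2 ∧ 0 < z p.1 j) ∧ (∀ p, #(S p) = n p) ∧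
      Pairwise (Function.onFun Disjoint S) := by
  cases nonempty_fintype κ
  let z' (p : ι × κ) (j : B) : R := if c j = p.2 then z p.1 j else 0
  have hz' (p j) : 0 ≤ z' p j := ite_nonneg (hz p.1 j) le_rfl
  have hz'1 (j) : ∑ p, z' p j ≤ 1 := by simpa [z', Fintype.sum_prod_type] using hz1 j
  obtain ⟨S, hS, hcard, hdisj⟩ := exists_pairwise_disjoint_card_eq hz' hz'1 (n := n) fun p => by
    simpa only [z', ← sum_filter] using hn p
  refine ⟨S, fun p j hj => ?_, hcard, hdisj⟩
  have hpos : 0 < if c j = p.2 then z p.1 j else 0 := hS p j hj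
  split_ifs at hpos with hc
  exacts [⟨hc, hpos⟩, absurd hpos (lt_irrefl 0)]

end FractionalHall

section ConfigurationLP

variable {A B : Type*} {w : B → ℝ} {Bi : A → Finset B} {T : ℝ} {x : A → Finset B → ℝ}

/-- `S` allocates the items to the agents: agent `i` gets only items from `Bi i`, and no item is
given twice. -/
structure IsAllocation (Bi S : A → Finset B) : Prop where
  subset : ∀ i, S i ⊆ Bi i
  disjoint : Pairwise (Function.onFun Disjoint S)

variable [Fintype B] [DecidableEq B]

/-- The total weight in `x` of the configurations of agent `i` that contain item `j`: the fraction
of `j` assigned to `i`. -/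
def share (x : A → Finset B → ℝ) (i : A) (j : B) : ℝ :=
  ∑ S with j ∈ S, x i S

theorem sum_share_mul (i : A) (G : Finset B) (v : B → ℝ) :
    ∑ j ∈ G, share x i j * v j = ∑ S, x i S * ∑ j ∈ S ∩ G, v j := by
  simp_rw [share, sum_mul, mul_sum, sum_filter]
  rw [sum_comm]
  simp_rw [← sum_filter, inter_comm, filter_mem_eq_inter]

variable [Fintype A]

/-- `x` is a feasible solution of the configuration LP `CLP(T)`. It is indexed by all sets of items
and supported on the configurations `S ⊆ Bi i` of value at least `T`. -/
structure IsCLPSolution (w : B → ℝ) (Bi : A → Finset B) (T : ℝ) (x : A → Finset B → ℝ) :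
    Prop where
  nonneg : ∀ i S, 0 ≤ x i S
  config : ∀ i S, 0 < x i S → S ⊆ Bi i ∧ T ≤ ∑ j ∈ S, w j
  one_le_sum : ∀ i, 1 ≤ ∑ S, x i S
  sum_share_le_one : ∀ j, ∑ i, share x i j ≤ 1

namespace IsCLPSolution

theorem share_nonneg (hx : IsCLPSolution w Bi T x) (i : A) (j : B) : 0 ≤ share x i j :=
  sum_nonneg fun S _ => hx.nonneg i S

theorem mem_of_share_pos (hx : IsCLPSolution w Bi T x) {i : A} {j : B} (h : 0 < share x i j) :
    j ∈ Bi i := by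
  obtain ⟨S, hS, hpos⟩ := (sum_pos_iff_of_nonneg fun S _ => hx.nonneg i S).1 h
  exact (hx.config i S hpos).1 (mem_filter.1 hS).2

theorem le_sum_share_mul (hx : IsCLPSolution w Bi T x) {i : A} {G : Finset B} {v : B → ℝ} {c : ℝ}
    (hc : 0 ≤ c) (h : ∀ S, 0 < x i S → c ≤ ∑ j ∈ S ∩ G, v j) :
    c ≤ ∑ j ∈ G, share x i j * v j := by
  calc c ≤ (∑ S, x i S) * c := le_mul_of_one_le_left hc (hx.one_le_sum i)
    _ = ∑ S, x i S * c := sum_mul _ _ _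
    _ ≤ ∑ S, x i S * ∑ j ∈ S ∩ G, v j := by
        refine sum_le_sum fun S _ => ?_
        rcases (hx.nonneg i S).eq_or_lt with h0 | hpos
        · simp [← h0]
        · exact mul_le_mul_of_nonneg_left (h S hpos) hpos.le
    _ = ∑ j ∈ G, share x i j * v j := (sum_share_mul i G v).symm

theorem mul_card_le_sum (hx : IsCLPSolution w Bi T x) {P : Finset A} {F : Finset B} {y : B → ℝ}
    {c : ℝ} (hy : ∀ j, 0 ≤ y j) (hc : 0 ≤ c)
    (h : ∀ i ∈ P, ∀ S, 0 < x i S → c ≤ ∑ j ∈ S ∩ F, y j) : c * #P ≤ ∑ j ∈ F, y j := by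
  calc c * #P = ∑ _i ∈ P, c := by rw [sum_const, nsmul_eq_mul, mul_comm]
    _ ≤ ∑ i ∈ P, ∑ j ∈ F, share x i j * y j :=
        sum_le_sum fun i hi => hx.le_sum_share_mul hc (h i hi)
    _ = ∑ j ∈ F, (∑ i ∈ P, share x i j) * y j := by
        rw [sum_comm]
        simp_rw [sum_mul]
    _ ≤ ∑ j ∈ F, y j := by
        refine sum_le_sum fun j _ => mul_le_of_le_one_left (hy j) ?_
        exact (sum_le_univ_sum_of_nonneg fun i => hx.share_nonneg i j).trans
          (hx.sum_share_le_one j)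

theorem isPricing (hx : IsCLPSolution w Bi T x) {H : Finset B} {k : ℕ} (hk : 0 < k)
    (hcount : ∀ i S, 0 < x i S → Disjoint S H → 3 * k < #S + 3) :
    IsPricing (fun i => {S | S ⊆ Bi i ∧ IsBundle H k S}) (bundlePrice H k) (2 * k - 1) := by
  have hK : (0 : ℝ) < 2 * k - 1 := by
    have : (1 : ℝ) ≤ k := by exact_mod_cast hk
    linarith
  refine ⟨hK, bundlePrice_nonneg hk, fun a e M Q he hQ hM => ?_, fun P F hlt => ?_⟩
  · exact sum_bundlePrice_union_le hk he.2 hQ fun i hi => ⟨(hM i hi).1.2, (hM i hi).2⟩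
  · by_contra! hmeet
    refine hlt.not_ge (hx.mul_card_le_sum (bundlePrice_nonneg hk) hK.le fun i hi S hS => ?_)
    exact le_sum_bundlePrice_inter hk (hcount i S hS) fun U hU hbundle =>
      hmeet i hi U ⟨hU.trans (hx.config i S hS).1, hbundle⟩

theorem exists_isAllocation_isBundle (hx : IsCLPSolution w Bi T x) {H : Finset B} {k : ℕ}
    (hk : 0 < k) (hcount : ∀ i S, 0 < x i S → Disjoint S H → 3 * k < #S + 3) :
    ∃ S, IsAllocation Bi S ∧ ∀ i, IsBundle H k (S i) := by
  classical
  obtain ⟨S, hS⟩ := (hx.isPricing hk hcount).exists_isMatchingOn univ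
  exact ⟨S, ⟨fun i => (hS.mem i (mem_univ i)).1, fun i i' hne =>
    hS.pairwiseDisjoint (mem_coe.2 (mem_univ i)) (mem_coe.2 (mem_univ i')) hne⟩,
    fun i => (hS.mem i (mem_univ i)).2⟩

theorem exists_isAllocation_of_third_le_or_eq (hx : IsCLPSolution w Bi T x) {b : ℝ} (hT : 0 < T)
    (hb : 0 < b) (hw : ∀ j, T / 3 ≤ w j ∨ w j = b) :
    ∃ S, IsAllocation Bi S ∧ ∀ i, T / 3 ≤ ∑ j ∈ S i, w j := by
  set H : Finset B := {j | T / 3 ≤ w j} with hH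
  set k := ⌈T / (3 * b)⌉₊
  have sum_light {S : Finset B} (hS : Disjoint S H) : ∑ j ∈ S, w j = #S * b := by
    rw [← nsmul_eq_mul]
    exact sum_eq_card_nsmul fun j hj =>
      (hw j).resolve_left fun h => Finset.disjoint_left.1 hS hj (by simpa [hH] using h)
  have hk0 : 0 < k := Nat.ceil_pos.2 (by positivity)
  have hkT : T ≤ k * (3 * b) := (div_le_iff₀ (by positivity)).1 (Nat.le_ceil _)
  have hcount (i S) (hS : 0 < x i S) (hSH : Disjoint S H) : 3 * k < #S + 3 := by
    have hvalue := (hx.config i S hS).2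
    rw [sum_light hSH] at hvalue
    have hceil : (k : ℝ) < T / (3 * b) + 1 := Nat.ceil_lt_add_one (by positivity)
    have hdiv : T / (3 * b) ≤ #S / 3 := by
      rw [div_le_iff₀ (by positivity)]
      linarith
    exact_mod_cast (by linarith : (3 * k : ℝ) < #S + 3)
  obtain ⟨S, hS, hbundle⟩ := hx.exists_isAllocation_isBundle hk0 hcount
  refine ⟨S, hS, fun i => ?_⟩
  rcases hbundle i with ⟨h, hh, hSi⟩ | ⟨hSH, hcard⟩
  · simpa [hSi, hH] using hh
  · rw [sum_light hSH, hcard]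
    linarith

section ValueClasses

variable {κ : Type*} [Fintype κ] {v : κ → ℝ} {c : B → κ}

theorem le_sum_class_share_mul [DecidableEq κ] (hx : IsCLPSolution w Bi T x) (hT : 0 ≤ T)
    (hw : ∀ j, w j = v (c j)) (i : A) :
    T ≤ ∑ l, (∑ j with c j = l, share x i j) * v l := by
  calc T ≤ ∑ j, share x i j * w j :=
        hx.le_sum_share_mul hT fun S hS => by simpa using (hx.config i S hS).2
    _ = ∑ l, ∑ j with c j = l, share x i j * w j := (sum_fiberwise _ _ _).symm
    _ = ∑ l, (∑ j with c j = l, share x i j) * v l := by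
        refine sum_congr rfl fun l _ => ?_
        rw [sum_mul]
        exact sum_congr rfl fun j hj => by rw [hw, (mem_filter.1 hj).2]

theorem exists_isAllocation_sub_sum_le (hx : IsCLPSolution w Bi T x) (hT : 0 ≤ T)
    (hv : ∀ l, 0 ≤ v l) (hw : ∀ j, w j = v (c j)) :
    ∃ S, IsAllocation Bi S ∧ ∀ i, T - ∑ l, v l ≤ ∑ j ∈ S i, w j := by
  classical
  let classShare (p : A × κ) : ℝ := ∑ j with c j = p.2, share x p.1 j
  obtain ⟨R, hR, hcard, hdisj⟩ := exists_pairwise_disjoint_card_eq_of_classes hx.share_nonneg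
    hx.sum_share_le_one c (n := fun p => ⌊classShare p⌋₊)
    fun p => Nat.floor_le (sum_nonneg fun j _ => hx.share_nonneg p.1 j)
  refine ⟨fun i => univ.biUnion fun l => R (i, l), ⟨fun i => ?_, fun i i' hne => ?_⟩,
    fun i => ?_⟩
  · exact biUnion_subset.2 fun l _ j hj => hx.mem_of_share_pos (hR _ j hj).2
  · simp only [Function.onFun, disjoint_biUnion_left, disjoint_biUnion_right]
    exact fun l _ l' _ => hdisj fun h => hne (congrArg Prod.fst h)
  · have hclass (l) : ∑ j ∈ R (i, l), w j = ⌊classShare (i, l)⌋₊ * v l := by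
      rw [← hcard, ← nsmul_eq_mul]
      exact sum_eq_card_nsmul fun j hj => by rw [hw, (hR _ j hj).1]
    have hfloor (l) : classShare (i, l) * v l - v l ≤ ⌊classShare (i, l)⌋₊ * v l := by
      rw [← sub_one_mul]
      exact mul_le_mul_of_nonneg_right (Nat.sub_one_lt_floor _).le (hv l)
    have hRi : ((univ : Finset κ) : Set κ).PairwiseDisjoint fun l => R (i, l) :=
      fun l _ l' _ hne => hdisj fun h => hne (congrArg Prod.snd h)
    calc T - ∑ l, v l ≤ ∑ l, classShare (i, l) * v l - ∑ l, v l :=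
          sub_le_sub_right (hx.le_sum_class_share_mul hT hw i) _
      _ = ∑ l, (classShare (i, l) * v l - v l) := (sum_sub_distrib _ _).symm
      _ ≤ ∑ l, ⌊classShare (i, l)⌋₊ * v l := sum_le_sum fun l _ => hfloor l
      _ = ∑ l, ∑ j ∈ R (i, l), w j := sum_congr rfl fun l _ => (hclass l).symm
      _ = ∑ j ∈ univ.biUnion fun l => R (i, l), w j := (sum_biUnion hRi).symm

end ValueClasses

end IsCLPSolution

theorem clp_integrality_gap_le_three_general {a b : ℝ} (ha : 0 < a) (hb : 0 < b)
    (hw : ∀ j, w j = a ∨ w j = b) (hT : 0 < T) (hx : IsCLPSolution w Bi T x) :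
    ∃ S, IsAllocation Bi S ∧ ∀ i, T / 3 ≤ ∑ j ∈ S i, w j := by
  by_cases haT : T / 3 ≤ a
  · exact hx.exists_isAllocation_of_third_le_or_eq hT hb fun j =>
      (hw j).imp_left fun h => haT.trans_eq h.symm
  by_cases hbT : T / 3 ≤ b
  · exact hx.exists_isAllocation_of_third_le_or_eq hT ha fun j =>
      (hw j).symm.imp_left fun h => hbT.trans_eq h.symm
  have hclass (j) : ∃ l : Bool, w j = cond l a b :=
    (hw j).elim (fun h => ⟨true, h⟩) fun h => ⟨false, h⟩
  choose c hc using hclass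
  obtain ⟨S, hS, hval⟩ := hx.exists_isAllocation_sub_sum_le hT.le
    (v := fun l => cond l a b) (by simpa using ⟨hb.le, ha.le⟩) hc
  refine ⟨S, hS, fun i => le_trans ?_ (hval i)⟩
  rw [Fintype.sum_bool, cond_true, cond_false]
  linarith

end ConfigurationLP

/-- **Integrality gap of the configuration LP is at most 3.**
If `CLP(T)` is feasible for a `(1,ε)`-restricted allocation instance (given by a
feasible fractional solution `x` supported on configurations of value `≥ T`),
then there is an allocation giving every agent value at least `T/3`. -/
theorem clp_integrality_gap_le_three
    {A B : Type*} [Fintype A] [Fintype B] [DecidableEq B]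
    (ε : ℝ) (hε : ε ∈ Set.Ioo (0 : ℝ) 1)
    (w : B → ℝ) (hw : ∀ j, w j = 1 ∨ w j = ε)
    (Bi : A → Finset B)
    (T : ℝ) (hT : 0 < T)
    (x : A → Finset B → ℝ)
    (hx0 : ∀ i S, 0 ≤ x i S)
    (hsupp : ∀ i S, 0 < x i S → S ⊆ Bi i ∧ T ≤ ∑ j ∈ S, w j)
    (hcov : ∀ i, 1 ≤ ∑ S : Finset B, x i S)
    (hpack : ∀ j : B,
      ∑ i : A, ∑ S ∈ Finset.univ.filter (fun S : Finset B => j ∈ S), x i S ≤ 1) :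
    ∃ S : A → Finset B,
      (∀ i, S i ⊆ Bi i) ∧
      (∀ i i', i ≠ i' → Disjoint (S i) (S i')) ∧
      (∀ i, T / 3 ≤ ∑ j ∈ S i, w j) := by
  obtain ⟨S, hS, hval⟩ :=
    clp_integrality_gap_le_three_general one_pos hε.1 hw hT ⟨hx0, hsupp, hcov, hpack⟩
  exact ⟨S, hS.subset, fun _ _ hne => hS.disjoint hne, hval⟩
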